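/- arXiv:2311.06820 — 4 statements merged into one kernel-verified Lean document; each statement's English description precedes it below -/
import Mathlib

section
/- Let δ̄ ∈ (0, π/2) and define γ(s) = −s·sin δ̄ + cos δ̄ − cos(s + δ̄). Then γ(s) > 0 for every s ∈ [−π − 2δ̄, π − 2δ̄] with s ≠ 0, and γ(0) = 0. -/
open Real

/-!
The derivative of `γ(s) = -s sin δ + cos δ - cos (s + δ)` is
`sin (s + δ) - sin δ = 2 sin (s / 2) cos (s / 2 + δ)`. For `s` strictly between `-π - 2δ` and
`π - 2δ` the cosine factor is positive and `s / 2 ∈ (-π, π)`, so the derivative has the sign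
of `s`. Hence `γ` strictly decreases on `[-π - 2δ, 0]` and strictly increases on `[0, π - 2δ]`,
and `γ(0) = 0` is its strict minimum.
-/

lemma hasDerivAt_potential (δ s : ℝ) :
    HasDerivAt (fun s : ℝ => -s * sin δ + cos δ - cos (s + δ))
      (2 * sin (s / 2) * cos (s / 2 + δ)) s := by
  have h1 : HasDerivAt (fun s : ℝ => -s * sin δ + cos δ) (-1 * sin δ) s :=
    ((hasDerivAt_id s).neg.mul_const (sin δ)).add_const _
  have h2 : HasDerivAt (fun s : ℝ => cos (s + δ)) (-sin (s + δ) * 1) s :=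
    ((hasDerivAt_id s).add_const δ).cos
  have h3 := sin_sub_sin (s + δ) δ
  rw [show (s + δ - δ) / 2 = s / 2 by ring, show (s + δ + δ) / 2 = s / 2 + δ by ring] at h3
  exact (h1.sub h2).congr_deriv (by linarith)

/-- Positive definiteness of the SMIB potential `γ(s) = −s sin δ̄ + cos δ̄ − cos(s + δ̄)`
on the interval `[−π − 2δ̄, π − 2δ̄]` between the two local maxima adjacent to the origin. -/
theorem stmt_10 (δb : ℝ) (hδ : δb ∈ Set.Ioo 0 (π / 2)) :
    (∀ s ∈ Set.Icc (-π - 2 * δb) (π - 2 * δb), s ≠ 0 →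
      0 < -s * sin δb + cos δb - cos (s + δb)) ∧
    -(0 : ℝ) * sin δb + cos δb - cos (0 + δb) = 0 := by
  obtain ⟨h0, h1⟩ := hδ
  have hz : -(0 : ℝ) * sin δb + cos δb - cos (0 + δb) = 0 := by simp
  have hcont : Continuous (fun s : ℝ => -s * sin δb + cos δb - cos (s + δb)) := by fun_prop
  refine ⟨fun s hs hne => ?_, hz⟩
  obtain ⟨hl, hr⟩ := hs
  rcases lt_or_gt_of_ne hne with hneg | hpos
  · have hanti : StrictAntiOn (fun s : ℝ => -s * sin δb + cos δb - cos (s + δb))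
        (Set.Icc (-π - 2 * δb) 0) := by
      refine strictAntiOn_of_deriv_neg (convex_Icc _ _) hcont.continuousOn fun x hx => ?_
      rw [interior_Icc] at hx
      obtain ⟨hx1, hx2⟩ := hx
      rw [(hasDerivAt_potential δb x).deriv]
      have hsin : sin (x / 2) < 0 := sin_neg_of_neg_of_neg_pi_lt (by linarith) (by linarith)
      have hcos : 0 < cos (x / 2 + δb) := cos_pos_of_mem_Ioo ⟨by linarith, by linarith⟩
      exact mul_neg_of_neg_of_pos (by linarith) hcos
    have h := hanti ⟨hl, hneg.le⟩ ⟨by linarith, le_rfl⟩ hneg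
    simp only [hz] at h
    exact h
  · have hmono : StrictMonoOn (fun s : ℝ => -s * sin δb + cos δb - cos (s + δb))
        (Set.Icc 0 (π - 2 * δb)) := by
      refine strictMonoOn_of_deriv_pos (convex_Icc _ _) hcont.continuousOn fun x hx => ?_
      rw [interior_Icc] at hx
      obtain ⟨hx1, hx2⟩ := hx
      rw [(hasDerivAt_potential δb x).deriv]
      have hsin : 0 < sin (x / 2) := sin_pos_of_pos_of_lt_pi (by linarith) (by linarith)
      have hcos : 0 < cos (x / 2 + δb) := cos_pos_of_mem_Ioo ⟨by linarith, by linarith⟩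
      positivity
    have h := hmono ⟨le_rfl, by linarith⟩ ⟨hpos.le, hr⟩ hpos
    simp only [hz] at h
    exact h
end

section
/- Let M > 0, D ≥ 0, P > 0, δ̄ ∈ (0, π/2), and let c satisfy 0 < c < P·(2 cos δ̄ − (π − 2δ̄) sin δ̄). Define W(x, v) = (M/2)·v² + P·(cos δ̄ − x·sin δ̄ − cos(x + δ̄)) and Ω = {(x, v) ∈ ℝ² : W(x, v) ≤ c and |x| ≤ π − 2δ̄}. Then Ω is an invariant set for the SMIB angle-deviation equation M·x'' + D·x' = P·(sin δ̄ − sin(x + δ̄)): every twice-differentiable solution x : [0,∞) → ℝ with (x(0), x'(0)) ∈ Ω satisfies (x(t), x'(t)) ∈ Ω for all t ≥ 0. -/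
/-!
The energy `W(x, v) = (M/2)v² + P·(cos δ̄ − x sin δ̄ − cos(x + δ̄))` has derivative `-D v² ≤ 0` along
solutions, so it stays below `c`. If `|x|` ever exceeded `π − 2δ̄`, the intermediate value theorem
would give a time at which `|x| = π − 2δ̄`. There the energy is at least
`P·(2 cos δ̄ − (π − 2δ̄) sin δ̄) > c` (`potential_boundary_ge`), a contradiction.
-/

open Real

/-- The potential on `|y| = π − 2δ̄` is at least its value at the right endpoint. At the left
endpoint the excess is `2 sin δ̄ · ((π − 2δ̄) − sin (π − 2δ̄)) ≥ 0`. -/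
lemma potential_boundary_ge {d y : ℝ} (hd : d ∈ Set.Ioo 0 (π / 2)) (hy : |y| = π - 2 * d) :
    2 * cos d - (π - 2 * d) * sin d ≤ cos d - y * sin d - cos (y + d) := by
  obtain ⟨h0, h1⟩ := hd
  rcases eq_or_eq_neg_of_abs_eq hy with rfl | rfl
  · rw [show π - 2 * d + d = π - d by ring, cos_pi_sub]
    linarith
  · rw [show -(π - 2 * d) + d = 2 * d + d - π by ring, cos_sub_pi, cos_add, cos_two_mul]
    have hs : sin (2 * d) ≤ π - 2 * d := by
      rw [← sin_pi_sub]
      exact sin_le (by linarith)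
    have hsd : 0 < sin d := sin_pos_of_pos_of_lt_pi h0 (by linarith)
    have h2 := sin_two_mul d
    nlinarith [mul_le_mul_of_nonneg_right hs hsd.le, sin_sq_add_cos_sq d,
      congrArg (· * cos d) (sin_sq_add_cos_sq d)]

/-- The set `Ω = {(x, v) : W(x,v) ≤ c, |x| ≤ π − 2δ̄}` with
`W(x,v) = (M/2)v² + P(cos δ̄ − x sin δ̄ − cos(x + δ̄))` is invariant for the SMIB
angle-deviation equation `M x'' + D x' = P(sin δ̄ − sin(x + δ̄))`, for any level
`0 < c < P(2 cos δ̄ − (π − 2δ̄) sin δ̄)`. -/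
theorem stmt_11 (M D P δb c : ℝ) (hM : 0 < M) (hD : 0 ≤ D) (hP : 0 < P)
    (hδ : δb ∈ Set.Ioo 0 (π / 2))
    (hc : 0 < c) (hc' : c < P * (2 * cos δb - (π - 2 * δb) * sin δb)) :
    ∀ x v : ℝ → ℝ,
      (∀ t ≥ (0 : ℝ), HasDerivAt x (v t) t) →
      (∀ t ≥ (0 : ℝ), ∃ a : ℝ, HasDerivAt v a t ∧
        M * a + D * v t = P * (sin δb - sin (x t + δb))) →
      (M / 2 * (v 0) ^ 2 + P * (cos δb - x 0 * sin δb - cos (x 0 + δb)) ≤ c ∧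
        |x 0| ≤ π - 2 * δb) →
      ∀ t ≥ (0 : ℝ),
        M / 2 * (v t) ^ 2 + P * (cos δb - x t * sin δb - cos (x t + δb)) ≤ c ∧
        |x t| ≤ π - 2 * δb := by
  intro x v hx hv ⟨hW0, hx0⟩
  set W : ℝ → ℝ := fun t =>
    M / 2 * (v t) ^ 2 + P * (cos δb - x t * sin δb - cos (x t + δb)) with hW
  have hder : ∀ t ≥ (0 : ℝ), HasDerivAt W (-(D * v t ^ 2)) t := by
    intro t ht
    obtain ⟨a, ha, heq⟩ := hv t ht
    have hkin := (ha.pow 2).const_mul (M / 2)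
    have hpot := ((((hx t ht).mul_const (sin δb)).const_sub (cos δb)).sub
      ((hx t ht).add_const δb).cos).const_mul P
    refine (hkin.add hpot).congr_deriv ?_
    push_cast
    linear_combination v t * heq
  have hanti : AntitoneOn W (Set.Ici 0) := by
    refine antitoneOn_of_deriv_nonpos (convex_Ici 0)
      (fun t ht => (hder t ht).continuousAt.continuousWithinAt) ?_ ?_
    · intro t ht
      exact (hder t (interior_subset ht)).differentiableAt.differentiableWithinAt
    · intro t ht
      rw [(hder t (interior_subset ht)).deriv]
      exact neg_nonpos.2 (by positivity)
  have hWle : ∀ t ≥ (0 : ℝ), W t ≤ c := fun t ht =>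
    (hanti Set.self_mem_Ici ht ht).trans hW0
  intro t ht
  refine ⟨hWle t ht, ?_⟩
  by_contra! hgt
  have hcont : ContinuousOn (fun s => |x s|) (Set.Icc 0 t) := fun s hs =>
    (hx s hs.1).continuousAt.abs.continuousWithinAt
  obtain ⟨s, hs, hxs⟩ := intermediate_value_Icc ht hcont ⟨hx0, hgt.le⟩
  have hU := mul_le_mul_of_nonneg_left (potential_boundary_ge hδ hxs) hP.le
  have hWs := hWle s hs.1
  simp only [hW] at hWs
  have hkin : 0 ≤ M / 2 * v s ^ 2 := by positivity
  linarith
end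

section
/- Let M > 0, τ > 0, K > 0, L > 0, D ≥ 0 with K − L < 0. Consider the linear closed-loop system on ℝ³: x'(t) = v(t), M·v'(t) = −D·v(t) + z(t) − L·x(t), τ·z'(t) = −z(t) + K·x(t). Then the origin is globally asymptotically stable: it is Lyapunov stable (for every ε > 0 there exists δ > 0 such that every differentiable solution with ‖(x(0),v(0),z(0))‖ < δ satisfies ‖(x(t),v(t),z(t))‖ < ε for all t ≥ 0), and every differentiable solution (x, v, z) : [0,∞) → ℝ³ satisfies (x(t), v(t), z(t)) → (0,0,0) as t → ∞. -/
/-!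
In the coordinates `w = z - K x` and with `k = L - K > 0` the system reads
`x' = v`, `M v' = -D v + w - k x`, `w' = -w / τ - K v`, and the energy
`(K M v² + K k x² + w²) / 2` has derivative `-K D v² - w² / τ`. This is only negative
semidefinite, so the cross terms `a w v + (a K / 2) x v` with a small `a > 0` are added: the first
contributes `-a K v²` to the derivative, the second `-(a K k / (2 M)) x²` at the cost of half of
the gain in `v²`, and every remaining mixed term is absorbed by Young's inequality. The one
mixed term without a factor `w`, a multiple of `a D x v`, vanishes when `D = 0` and is otherwise
absorbed by the damping `K D v²` together with part of the `x²` term. The result is a strict quadratic Lyapunov function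
(`exists_strict_lyapunov`), hence exponential decay of `x² + v² + z²` with constants that do not
depend on the solution (`exists_exp_decay`), and both claims follow.
-/

/-- Young's inequality for a mixed term, as nonnegativity of a binary quadratic form. -/
lemma mixed_le {α β γ : ℝ} (hα : 0 < α) (h : γ ^ 2 ≤ 4 * α * β) (x y : ℝ) :
    γ * (x * y) ≤ α * x ^ 2 + β * y ^ 2 := by
  have h1 : 0 ≤ 4 * α * (α * x ^ 2 + β * y ^ 2 - γ * (x * y)) := by
    nlinarith [sq_nonneg (2 * α * x - γ * y), mul_nonneg (sub_nonneg.2 h) (sq_nonneg y)]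
  have h2 := nonneg_of_mul_nonneg_right h1 (by positivity)
  linarith

/-- The strict Lyapunov function in the coordinates `(x, v, w)`, with weight `a` on the
cross terms. -/
noncomputable def lyap (M K k a x v w : ℝ) : ℝ :=
  (K * M * v ^ 2 + K * k * x ^ 2 + w ^ 2) / 2 + a * (w * v) + a * K / 2 * (x * v)

/-- The derivative of `lyap` along the system, the substitutions for `v'` and `w'` having been
made. -/
noncomputable def lyapDot (M τ K k D a x v w : ℝ) : ℝ :=
  -K * D * v ^ 2 - w ^ 2 / τ
    + a * ((-w / τ - K * v) * v + w * ((-D * v + w - k * x) / M))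
    + a * K / 2 * (v * v + x * ((-D * v + w - k * x) / M))

/-- The weight `a` exists because each requirement bounds `a`, times a constant, by a positive
number, and so holds for all small positive `a`. -/
lemma exists_small_weight (M τ K k D S : ℝ) (hM : 0 < M) (hτ : 0 < τ) (hK : 0 < K)
    (hk : 0 < k) :
    ∃ a > 0, a ≤ 1 / 2 ∧ a / 2 + a * K / 4 ≤ K * M / 4 ∧ a ≤ k ∧ a * D ≤ 2 * M * k ∧
      a * S ≤ 1 / (2 * τ) := by
  have ev : ∀ c d : ℝ, 0 < d → ∀ᶠ a in nhdsWithin (0 : ℝ) (Set.Ioi 0), a * c ≤ d := by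
    intro c d hd
    have hc : Filter.Tendsto (fun a : ℝ => a * c) (nhdsWithin 0 (Set.Ioi 0)) (nhds 0) := by
      have : ContinuousAt (fun a : ℝ => a * c) 0 := by fun_prop
      simpa [ContinuousAt] using this.tendsto.mono_left nhdsWithin_le_nhds
    exact (hc.eventually_lt_const hd).mono fun _ h => h.le
  obtain ⟨a, ha, h1, h2, h3, h4, h5⟩ := (eventually_mem_nhdsWithin.and
    ((ev 1 (1 / 2) (by norm_num)).and ((ev (1 / 2 + K / 4) (K * M / 4) (by positivity)).and
      ((ev 1 k hk).and ((ev D (2 * M * k) (by positivity)).and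
        (ev S (1 / (2 * τ)) (by positivity))))))).exists
  exact ⟨a, ha, by linarith, by linarith, by linarith, h4, h5⟩

/-- For a suitable weight `a`, `lyap` is comparable to `x² + v² + w²` and `lyapDot` is negative
definite. -/
lemma exists_strict_lyapunov (M τ K k D : ℝ) (hM : 0 < M) (hτ : 0 < τ) (hK : 0 < K)
    (hk : 0 < k) (hD : 0 ≤ D) :
    ∃ a c C : ℝ, 0 < c ∧ 0 < C ∧ ∀ x v w : ℝ,
      c * (x ^ 2 + v ^ 2 + w ^ 2) ≤ lyap M K k a x v w ∧
      lyap M K k a x v w ≤ C * (x ^ 2 + v ^ 2 + w ^ 2) ∧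
      lyapDot M τ K k D a x v w ≤ -c * (x ^ 2 + v ^ 2 + w ^ 2) := by
  set p := 1 / τ + D / M with hp
  set q := (K / 2 - k) / M with hq
  -- `a * S` bounds the total coefficient of `w ^ 2` produced by the cross terms.
  set S := 1 / M + 2 * p ^ 2 / K + 2 * q ^ 2 * M / (K * k) with hS
  obtain ⟨a, ha, h1, h2, h3, h4, h5⟩ :=
    exists_small_weight M τ K k D S hM hτ hK hk
  have hτ2 : 1 / τ = 2 * (1 / (2 * τ)) := by field_simp
  have hα : 0 < a * K * k / (8 * M) := by positivity
  obtain ⟨c, hc, c1, c2, c3, c4, c5, c6⟩ : ∃ c > 0, c ≤ K * k / 4 ∧ c ≤ K * M / 4 ∧ c ≤ 1 / 4 ∧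
      c ≤ a * K * k / (4 * M) ∧ c ≤ a * K * (3 / 8) ∧ c ≤ 1 / (2 * τ) := by
    refine ⟨min (K * k / 4) (min (K * M / 4) (min (1 / 4) (min (a * K * k / (4 * M))
      (min (a * K * (3 / 8)) (1 / (2 * τ)))))), by positivity, ?_⟩
    simp only [← le_min_iff, le_refl]
  refine ⟨a, c, K * k + K * M + 1, hc, by positivity, fun x v w => ?_⟩
  have hx := sq_nonneg x
  have hv := sq_nonneg v
  have hw := sq_nonneg w
  have b1 : |a * (w * v)| ≤ a / 2 * (w ^ 2 + v ^ 2) := by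
    rw [abs_le]
    constructor <;> nlinarith [mul_nonneg ha.le (sq_nonneg (w + v)),
      mul_nonneg ha.le (sq_nonneg (w - v))]
  have haK : 0 ≤ a * K := by positivity
  have b2 : |a * K / 2 * (x * v)| ≤ a * K / 4 * (x ^ 2 + v ^ 2) := by
    rw [abs_le]
    constructor <;> nlinarith [mul_nonneg haK (sq_nonneg (x + v)),
      mul_nonneg haK (sq_nonneg (x - v))]
  rw [abs_le] at b1 b2
  have m1 : a / 2 * w ^ 2 ≤ 1 / 4 * w ^ 2 := mul_le_mul_of_nonneg_right (by linarith) hw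
  have m2 : (a / 2 + a * K / 4) * v ^ 2 ≤ K * M / 4 * v ^ 2 := by gcongr
  have m3 : a * K / 4 * x ^ 2 ≤ K * k / 4 * x ^ 2 := by
    refine mul_le_mul_of_nonneg_right ?_ hx
    linarith [mul_le_mul_of_nonneg_right h3 hK.le]
  have n1 := mul_le_mul_of_nonneg_right c1 hx
  have n2 := mul_le_mul_of_nonneg_right c2 hv
  have n3 := mul_le_mul_of_nonneg_right c3 hw
  have n4 := mul_le_mul_of_nonneg_right c4 hx
  have n5 := mul_le_mul_of_nonneg_right c5 hv
  have n6 := mul_le_mul_of_nonneg_right c6 hw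
  have hKk : 0 < K * k := by positivity
  have hKM : 0 < K * M := by positivity
  refine ⟨?_, ?_, ?_⟩
  · unfold lyap; linarith
  · unfold lyap
    linarith [mul_nonneg hKk.le hx, mul_nonneg hKM.le hx, mul_nonneg hKk.le hv,
      mul_nonneg hKM.le hv, mul_nonneg hKk.le hw, mul_nonneg hKM.le hw]
  · have y1 := mixed_le (α := a * K / 8) (β := a * (2 * p ^ 2 / K)) (γ := -(a * p))
      (by positivity) (le_of_eq (by field_simp; ring)) v w
    have y2 := mixed_le (α := a * K * k / (8 * M)) (β := a * (2 * q ^ 2 * M / (K * k)))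
      (γ := a * q) hα (le_of_eq (by field_simp; ring)) x w
    have y3 := mixed_le (α := a * K * k / (8 * M)) (β := K * D) (γ := -(a * K * D / (2 * M)))
      hα (by
        have e : 4 * (a * K * k / (8 * M)) * (K * D) - (-(a * K * D / (2 * M))) ^ 2
            = a * K ^ 2 * D / (4 * M ^ 2) * (2 * M * k - a * D) := by field_simp; ring
        have : 0 ≤ a * K ^ 2 * D / (4 * M ^ 2) * (2 * M * k - a * D) :=
          mul_nonneg (by positivity) (by linarith)
        linarith) x v
    have e : lyapDot M τ K k D a x v w = -(K * D + a * K / 2) * v ^ 2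
        - (1 / τ - a * (1 / M)) * w ^ 2 - a * K * k / (2 * M) * x ^ 2
        + -(a * p) * (v * w) + a * q * (x * w) + -(a * K * D / (2 * M)) * (x * v) := by
      unfold lyapDot; rw [hp, hq]; field_simp; ring
    have h5' := mul_le_mul_of_nonneg_right h5 hw
    have e4 : a * K * k / (2 * M) = 4 * (a * K * k / (8 * M)) := by field_simp; ring
    have e5 : a * K * k / (4 * M) = 2 * (a * K * k / (8 * M)) := by field_simp; ring
    rw [e, hτ2, e4]
    rw [e5] at n4
    rw [hS] at h5'
    clear e b1 b2 m1 m2 m3 n1 n2 n3 h1 h2 h3 h4 h5 c1 c2 c3 c4 c5 c6 hτ2 e4 e5 hS hp hq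
    clear_value p q
    linarith only [y1, y2, y3, h5', n4, n5, n6]

/-- Uniform exponential decay: `R` and `γ` do not depend on the solution. It holds because
`exp ((c / C) t)` times the Lyapunov function is nonincreasing on `[0, ∞)`. -/
lemma exists_exp_decay (M τ K L D : ℝ) (hM : 0 < M) (hτ : 0 < τ) (hK : 0 < K)
    (hD : 0 ≤ D) (hKL : K - L < 0) :
    ∃ R γ : ℝ, 1 ≤ R ∧ 0 < γ ∧ ∀ x v z : ℝ → ℝ,
      (∀ t ≥ (0 : ℝ), HasDerivAt x (v t) t) →
      (∀ t ≥ (0 : ℝ), ∃ a : ℝ, HasDerivAt v a t ∧ M * a = -D * v t + z t - L * x t) →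
      (∀ t ≥ (0 : ℝ), ∃ c : ℝ, HasDerivAt z c t ∧ τ * c = -z t + K * x t) →
      ∀ t ≥ (0 : ℝ), x t ^ 2 + v t ^ 2 + z t ^ 2 ≤
        R * (x 0 ^ 2 + v 0 ^ 2 + z 0 ^ 2) * Real.exp (-(γ * t)) := by
  obtain ⟨a, c, C, hc, hC, H⟩ :=
    exists_strict_lyapunov M τ K (L - K) D hM hτ hK (by linarith) hD
  -- Passing between `z` and `w = z - K x`, in either direction, costs a factor `B`.
  set B := 2 + 2 * K ^ 2 with hB
  have hB0 : 2 ≤ B := by have := sq_nonneg K; linarith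
  refine ⟨1 + B * (C / c * B), c / C, by have : 0 ≤ B * (C / c * B) := by positivity
                                         linarith, by positivity, ?_⟩
  intro x v z hx hv hz t ht
  set V : ℝ → ℝ := fun t => lyap M K (L - K) a (x t) (v t) (z t - K * x t) with hV
  have hVd : ∀ s ≥ (0 : ℝ),
      HasDerivAt V (lyapDot M τ K (L - K) D a (x s) (v s) (z s - K * x s)) s := by
    intro s hs
    obtain ⟨A, hA, hA'⟩ := hv s hs
    obtain ⟨Z, hZ, hZ'⟩ := hz s hs
    have hX := hx s hs
    have hW := hZ.sub (hX.const_mul K)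
    have h := (((((hA.pow 2).const_mul (K * M)).add ((hX.pow 2).const_mul (K * (L - K)))).add
      (hW.pow 2)).div_const 2).add ((hW.mul hA).const_mul a) |>.add
        ((hX.mul hA).const_mul (a * K / 2))
    refine (h.congr_deriv ?_)
    have eA : A = (-D * v s + z s - L * x s) / M := by field_simp; linarith
    have eZ : Z = (-z s + K * x s) / τ := by field_simp; linarith
    simp only [lyapDot, Pi.sub_apply]
    rw [eA, eZ]
    field_simp
    ring
  have hE : ∀ s ≥ (0 : ℝ), HasDerivAt (fun s => Real.exp (c / C * s) * V s)
      (Real.exp (c / C * s) * (c / C * 1) * V s + Real.exp (c / C * s) *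
        lyapDot M τ K (L - K) D a (x s) (v s) (z s - K * x s)) s := fun s hs =>
    (((hasDerivAt_id s).const_mul (c / C)).exp).mul (hVd s hs)
  have hanti : AntitoneOn (fun s => Real.exp (c / C * s) * V s) (Set.Ici 0) := by
    refine antitoneOn_of_deriv_nonpos (convex_Ici 0)
      (fun s hs => (hE s hs).continuousAt.continuousWithinAt)
      (fun s hs => (hE s (interior_subset hs)).differentiableAt.differentiableWithinAt) ?_
    intro s hs
    rw [(hE s (interior_subset hs)).deriv]
    obtain ⟨_, h2, h3⟩ := H (x s) (v s) (z s - K * x s)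
    have h4 : c / C * V s ≤ c * (x s ^ 2 + v s ^ 2 + (z s - K * x s) ^ 2) := by
      calc c / C * V s ≤ c / C * (C * (x s ^ 2 + v s ^ 2 + (z s - K * x s) ^ 2)) := by
            gcongr
        _ = _ := by field_simp
    have h5 : 0 ≤ Real.exp (c / C * s) * (-(c / C * V s)
        - lyapDot M τ K (L - K) D a (x s) (v s) (z s - K * x s)) :=
      mul_nonneg (Real.exp_pos _).le (by linarith)
    linarith
  have hle := hanti (Set.mem_Ici.2 le_rfl) (Set.mem_Ici.2 ht) ht
  simp only [mul_zero, Real.exp_zero, one_mul] at hle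
  have hVt : V t ≤ V 0 * Real.exp (-(c / C * t)) := by
    rw [Real.exp_neg, ← div_eq_mul_inv, le_div_iff₀ (Real.exp_pos _)]
    linarith
  obtain ⟨g1, _, _⟩ := H (x t) (v t) (z t - K * x t)
  obtain ⟨_, g2, _⟩ := H (x 0) (v 0) (z 0 - K * x 0)
  have k1 : x t ^ 2 + v t ^ 2 + z t ^ 2 ≤
      B * (x t ^ 2 + v t ^ 2 + (z t - K * x t) ^ 2) := by
    rw [hB]
    nlinarith [sq_nonneg (z t - 2 * K * x t), sq_nonneg (x t), sq_nonneg (v t),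
      sq_nonneg (K * v t), sq_nonneg (K * (z t - K * x t))]
  have k2 : x 0 ^ 2 + v 0 ^ 2 + (z 0 - K * x 0) ^ 2 ≤
      B * (x 0 ^ 2 + v 0 ^ 2 + z 0 ^ 2) := by
    rw [hB]
    nlinarith [sq_nonneg (z 0 + K * x 0), sq_nonneg (x 0), sq_nonneg (v 0),
      sq_nonneg (K * v 0), sq_nonneg (K * z 0), sq_nonneg (z 0)]
  set N := x 0 ^ 2 + v 0 ^ 2 + z 0 ^ 2
  have hN : 0 ≤ N := by positivity
  calc x t ^ 2 + v t ^ 2 + z t ^ 2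
      ≤ B * (x t ^ 2 + v t ^ 2 + (z t - K * x t) ^ 2) := k1
    _ ≤ B * (V t / c) := by
        gcongr; rw [le_div_iff₀ hc]; linarith
    _ ≤ B * ((C * (B * N)) * Real.exp (-(c / C * t)) / c) := by
        have : V 0 ≤ C * (B * N) := g2.trans (by gcongr)
        gcongr
        exact hVt.trans (by gcongr)
    _ = B * (C / c * B) * N * Real.exp (-(c / C * t)) := by ring
    _ ≤ (1 + B * (C / c * B)) * N * Real.exp (-(c / C * t)) := by
        gcongr; linarith


/-- Global asymptotic stability of the origin for the closed-loop linear
system of the feedback-linearized SMIB plant with the phase-lead battery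
controller: `x' = v`, `M v' = −D v + z − L x`, `τ z' = −z + K x`, when `K − L < 0`. -/
theorem stmt_13 (M τ K L D : ℝ) (hM : 0 < M) (hτ : 0 < τ) (hK : 0 < K)
    (hL : 0 < L) (hD : 0 ≤ D) (hKL : K - L < 0) :
    (∀ ε > 0, ∃ δ > 0, ∀ x v z : ℝ → ℝ,
      (∀ t ≥ (0 : ℝ), HasDerivAt x (v t) t) →
      (∀ t ≥ (0 : ℝ), ∃ a : ℝ, HasDerivAt v a t ∧ M * a = -D * v t + z t - L * x t) →
      (∀ t ≥ (0 : ℝ), ∃ c : ℝ, HasDerivAt z c t ∧ τ * c = -z t + K * x t) →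
      ‖(x 0, v 0, z 0)‖ < δ →
      ∀ t ≥ (0 : ℝ), ‖(x t, v t, z t)‖ < ε) ∧
    (∀ x v z : ℝ → ℝ,
      (∀ t ≥ (0 : ℝ), HasDerivAt x (v t) t) →
      (∀ t ≥ (0 : ℝ), ∃ a : ℝ, HasDerivAt v a t ∧ M * a = -D * v t + z t - L * x t) →
      (∀ t ≥ (0 : ℝ), ∃ c : ℝ, HasDerivAt z c t ∧ τ * c = -z t + K * x t) →
      Filter.Tendsto (fun t => (x t, v t, z t)) Filter.atTop (nhds (0, 0, 0))) := by
  obtain ⟨R, γ, hR, hγ, H⟩ := exists_exp_decay M τ K L D hM hτ hK hD hKL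
  refine ⟨fun ε hε => ⟨ε / (3 * R), by positivity, ?_⟩, ?_⟩
  · intro x v z hx hv hz h0 t ht
    have h := H x v z hx hv hz t ht
    simp only [Prod.norm_def, Real.norm_eq_abs, sup_lt_iff] at h0 ⊢
    obtain ⟨hx0, hv0, hz0⟩ := h0
    have hδ : 0 < ε / (3 * R) := by positivity
    rw [← abs_of_pos hδ, ← sq_lt_sq] at hx0 hv0 hz0
    have he : Real.exp (-(γ * t)) ≤ 1 := Real.exp_le_one_iff.2 (by
      have : 0 ≤ γ * t := by positivity
      linarith)
    have hlt : x t ^ 2 + v t ^ 2 + z t ^ 2 < ε ^ 2 := by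
      calc x t ^ 2 + v t ^ 2 + z t ^ 2
          ≤ R * (x 0 ^ 2 + v 0 ^ 2 + z 0 ^ 2) * Real.exp (-(γ * t)) := h
        _ ≤ R * (x 0 ^ 2 + v 0 ^ 2 + z 0 ^ 2) * 1 := by gcongr
        _ < R * (3 * (ε / (3 * R)) ^ 2) * 1 := by gcongr; linarith
        _ = ε ^ 2 / (3 * R) := by field_simp
        _ ≤ ε ^ 2 := div_le_self (by positivity) (by linarith)
    have hx2 := sq_nonneg (x t)
    have hv2 := sq_nonneg (v t)
    have hz2 := sq_nonneg (z t)
    exact ⟨abs_lt_of_sq_lt_sq (by linarith) hε.le, abs_lt_of_sq_lt_sq (by linarith) hε.le,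
      abs_lt_of_sq_lt_sq (by linarith) hε.le⟩
  · intro x v z hx hv hz
    have hexp : Filter.Tendsto (fun t => R * (x 0 ^ 2 + v 0 ^ 2 + z 0 ^ 2) *
        Real.exp (-(γ * t))) Filter.atTop (nhds 0) := by
      have := (Real.tendsto_exp_neg_atTop_nhds_zero.comp
        (Filter.tendsto_id.const_mul_atTop hγ)).const_mul (R * (x 0 ^ 2 + v 0 ^ 2 + z 0 ^ 2))
      simpa using this
    have key : ∀ f : ℝ → ℝ, (∀ t, f t ^ 2 ≤ x t ^ 2 + v t ^ 2 + z t ^ 2) →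
        Filter.Tendsto f Filter.atTop (nhds 0) := by
      intro f hf
      have h2 : Filter.Tendsto (fun t => f t ^ 2) Filter.atTop (nhds 0) :=
        squeeze_zero' (Filter.Eventually.of_forall fun t => sq_nonneg _)
          ((Filter.eventually_ge_atTop 0).mono fun t ht =>
            (hf t).trans (H x v z hx hv hz t ht)) hexp
      have h3 := h2.sqrt
      simp only [Real.sqrt_sq_eq_abs, Real.sqrt_zero] at h3
      exact (tendsto_zero_iff_abs_tendsto_zero f).2 h3
    refine (key x fun t => ?_).prodMk_nhds ((key v fun t => ?_).prodMk_nhds (key z fun t => ?_))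
    all_goals
      have hx2 := sq_nonneg (x t)
      have hv2 := sq_nonneg (v t)
      have hz2 := sq_nonneg (z t)
      linarith
end

section
/- Let M > 0, τ > 0, K > 0, L > 0, D ≥ 0, and let (x, v, z) : [0,∞) → ℝ³ be a differentiable solution of x'(t) = v(t), M·v'(t) = −D·v(t) + z(t) − L·x(t), τ·z'(t) = −z(t) + K·x(t). Define W(t) = (M/2)·v(t)² + z(t)²/(2K) − z(t)·x(t) + (L/2)·x(t)². Then W is differentiable and W'(t) = −D·v(t)² − (z(t) − K·x(t))²/(τK) for all t ≥ 0; in particular W is nonincreasing. -/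
/-!
The product rule gives `W' = v (M v') + (z - K x) z' / K - z v + L x v`. Substituting
`M v' = -D v + z - L x` cancels the coupling terms `z v` and `L x v` and leaves `-D v²`, while
`z' = -(z - K x) / τ` turns the remaining term into `-(z - K x)² / (τ K)`. Both are nonpositive,
so `W` is antitone on the convex set `[0,∞)`.
-/

/-- Along any solution of the closed-loop linear system `x' = v`,
`M v' = −D v + z − L x`, `τ z' = −z + K x`, the Lur'e–Postnikov-like Lyapunov
function `W = (M/2)v² + z²/(2K) − z x + (L/2)x²` is differentiable with
`W' = −D v² − (z − K x)²/(τ K)`; in particular `W` is nonincreasing on `[0,∞)`. -/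
theorem stmt_16 (M τ K L D : ℝ) (hM : 0 < M) (hτ : 0 < τ) (hK : 0 < K)
    (hL : 0 < L) (hD : 0 ≤ D)
    (x v z : ℝ → ℝ)
    (hx : ∀ t ≥ (0 : ℝ), HasDerivAt x (v t) t)
    (hv : ∀ t ≥ (0 : ℝ), ∃ a : ℝ, HasDerivAt v a t ∧ M * a = -D * v t + z t - L * x t)
    (hz : ∀ t ≥ (0 : ℝ), ∃ c : ℝ, HasDerivAt z c t ∧ τ * c = -z t + K * x t) :
    (∀ t ≥ (0 : ℝ),
      HasDerivAt (fun s => M / 2 * (v s) ^ 2 + (z s) ^ 2 / (2 * K) - z s * x s + L / 2 * (x s) ^ 2)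
        (-D * (v t) ^ 2 - (z t - K * x t) ^ 2 / (τ * K)) t) ∧
    AntitoneOn (fun t => M / 2 * (v t) ^ 2 + (z t) ^ 2 / (2 * K) - z t * x t + L / 2 * (x t) ^ 2)
      (Set.Ici 0) := by
  have hW : ∀ t ≥ (0 : ℝ),
      HasDerivAt (fun s => M / 2 * (v s) ^ 2 + (z s) ^ 2 / (2 * K) - z s * x s + L / 2 * (x s) ^ 2)
        (-D * (v t) ^ 2 - (z t - K * x t) ^ 2 / (τ * K)) t := by
    intro t ht
    obtain ⟨a, hva, ha⟩ := hv t ht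
    obtain ⟨c, hzc, hc⟩ := hz t ht
    have hxt := hx t ht
    have hc' : c = -(z t - K * x t) / τ := by
      rw [eq_div_iff hτ.ne']
      linarith
    refine HasDerivAt.congr_deriv (((((hva.fun_pow 2).const_mul (M / 2)).fun_add ((hzc.fun_pow 2).div_const (2 * K))).fun_sub
      (hzc.fun_mul hxt)).fun_add ((hxt.fun_pow 2).const_mul (L / 2))) ?_
    have hDv : -D * v t ^ 2 = v t * (M * a) - z t * v t + L * x t * v t := by
      rw [ha]
      ring
    rw [hDv, hc']
    norm_num
    field_simp
    ring
  refine ⟨hW, antitoneOn_of_hasDerivWithinAt_nonpos (convex_Ici 0)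
    (fun t ht => (hW t ht).continuousAt.continuousWithinAt)
    (fun t ht => (hW t (interior_subset ht)).hasDerivWithinAt) fun t _ => ?_⟩
  have h1 : 0 ≤ D * v t ^ 2 := by positivity
  have h2 : 0 ≤ (z t - K * x t) ^ 2 / (τ * K) := by positivity
  linarith
end
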